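/- Let γ ∈ (0, 3/8) and let H=(V,E) be a 3-uniform hypergraph on n ≥ 168/γ⁷ vertices with δ₁(H) ≥ (5/8 + γ)²·C(n,2). Then for every pair of vertices x, y ∈ V there exists a set D ⊆ V of size |D| = ⌈γn⌉ such that one of the following holds: either deg(x,d) ≥ γn and deg(y,d) ≥ (3/8)n for all d ∈ D, or deg(y,d) ≥ γn and deg(x,d) ≥ (3/8)n for all d ∈ D. -/

import Mathlib

open Finset

/-- The number of edges of `H` containing both `u` and `v`. -/
def pairDeg {V : Type} [DecidableEq V] (H : Finset (Finset V)) (u v : V) : ℕ :=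
  (H.filter (fun e => u ∈ e ∧ v ∈ e)).card

/-!
Pairs `{v, w}` completing `x` to an edge form the link graph of `x`, in which the degree of `v ≠ x`
is the pair degree of `x` and `v`, and whose degree sum is twice the degree of `x`. If a graph on
`N` vertices has `a` vertices of degree at least `3N/8` and `b` of degree at least `γN`, then at
most `ab` of its degree sum joins the first kind to the second, the `b - a` intermediate vertices
contribute at most `3N/8` each, and the `N - b` low vertices account for at most `2γN` each: once
for their own degree, once as neighbours of the first kind. If `a + b < (1 + γ)N`, the total,
maximized over `b ≥ 3N/8`, is too small for the density `(5/8 + γ)²`; the constants match at `γ = 0`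
because `1/4 + (3/8)² = (5/8)²`. For `b ≤ 3N/8` the cruder total `b² + 2γN(N - b)` is too small.

Adding `(1 + γ)n ≤ a + b` for the links of `x` and `y`, one of the sums `a_y + b_x`, `a_x + b_y` is
at least `(1 + γ)n`, so that the two vertex sets it counts share at least `γn` vertices.
-/

section Inequalities

variable {γ c N a b S : ℝ}

theorem le_mul_sq_of_mul_le (hb : c * N ≤ b) (hab : a + b ≤ (1 + γ) * N)
    (hS : S ≤ a * b + (b - a) * (c * N) + 2 * ((N - b) * (γ * N))) :
    S ≤ (1 / 4 + c ^ 2 + (3 / 2 - 2 * c) * γ + γ ^ 2 / 4) * N ^ 2 := by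
  have ha : a * (b - c * N) ≤ ((1 + γ) * N - b) * (b - c * N) :=
    mul_le_mul_of_nonneg_right (by linarith) (by linarith)
  -- With `(1 + γ) * N - b` in place of `a`, the bound is maximal at `b = (1 / 2 + c - γ / 2) * N`.
  linarith [sq_nonneg (b - (1 / 2 + c - γ / 2) * N)]

theorem le_mul_sq_of_le_mul (hγ : 0 ≤ γ) (hγc : γ ≤ c) (hN : 0 ≤ N) (hb₀ : 0 ≤ b)
    (hb : b ≤ c * N) (hS : S ≤ b * b + 2 * ((N - b) * (γ * N))) :
    S ≤ (c ^ 2 + 2 * γ - γ ^ 2) * N ^ 2 := by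
  have hγN : 0 ≤ γ * N := mul_nonneg hγ hN
  have hγcN : γ * N ≤ c * N := mul_le_mul_of_nonneg_right hγc hN
  have hsq : (b - γ * N) ^ 2 ≤ (c * N) ^ 2 := sq_le_sq' (by linarith) (by linarith)
  linarith

theorem one_add_mul_le_add_of_density_le (hγ : 0 ≤ γ) (hγ' : γ ≤ 3 / 8) (hγN : 2 ≤ γ * N)
    (hb : 0 ≤ b) (hS : (5 / 8 + γ) ^ 2 * (N * (N - 1)) ≤ S)
    (hSab : S ≤ a * b + (b - a) * (3 / 8 * N) + 2 * ((N - b) * (γ * N)))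
    (hSb : S ≤ b * b + 2 * ((N - b) * (γ * N))) :
    (1 + γ) * N ≤ a + b := by
  have hN : 0 < N := by nlinarith
  by_contra! hlt
  rcases le_total (3 / 8 * N) b with hbN | hbN
  · have hub := le_mul_sq_of_mul_le hbN hlt.le hSab
    have hgap : (γ * N * (1 / 2 + 3 / 4 * γ)) * N ≤ (5 / 8 + γ) ^ 2 * N := by linarith
    have := le_of_mul_le_mul_right hgap hN
    nlinarith
  · have hub := le_mul_sq_of_le_mul hγ hγ' hN.le hb hbN hSb
    have hgap : (1 / 4 - 3 / 4 * γ + 2 * γ ^ 2) * N * N ≤ (5 / 8 + γ) ^ 2 * N := by linarith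
    have := le_of_mul_le_mul_right hgap hN
    nlinarith [sq_nonneg (γ - 3 / 16)]

theorem le_mul_of_div_pow_succ_le {k : ℕ} (hγ : 0 < γ) (hγ' : γ ≤ 1) (hc : 0 ≤ c)
    (hN : c / γ ^ (k + 1) ≤ N) : c ≤ γ * N :=
  calc c ≤ c / γ ^ k := le_div_self hc (pow_pos hγ k) (pow_le_one₀ hγ.le hγ')
    _ = γ * (c / γ ^ (k + 1)) := by rw [pow_succ]; field_simp
    _ ≤ γ * N := by gcongr

end Inequalities

theorem exists_subset_inter_card_eq_ceil {α : Type*} [Fintype α] [DecidableEq α]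
    {s t : Finset α} {r : ℝ} (h : Fintype.card α + r ≤ #s + #t) :
    ∃ u ⊆ s ∩ t, #u = ⌈r⌉₊ := by
  refine exists_subset_card_eq (Nat.ceil_le.2 ?_)
  have hunion : (#(s ∪ t) : ℝ) ≤ Fintype.card α := mod_cast card_le_univ _
  have hinter : (#(s ∩ t) + #(s ∪ t) : ℝ) = #s + #t := mod_cast card_inter_add_card_union s t
  linarith

section Graph

variable {V : Type*} [Fintype V] (G : SimpleGraph V) [DecidableRel G.Adj]

theorem sum_card_neighborFinset_inter_comm [DecidableEq V] (s t : Finset V) :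
    ∑ v ∈ s, #(G.neighborFinset v ∩ t) = ∑ w ∈ t, #(G.neighborFinset w ∩ s) := by
  convert sum_card_bipartiteAbove_eq_sum_card_bipartiteBelow G.Adj (s := s) (t := t) using 3 <;>
  · ext; simp [G.adj_comm, and_comm]

theorem sum_degree_le_card_mul_card_add_sum_compl [DecidableEq V] (s t : Finset V) :
    ∑ v ∈ s, G.degree v ≤ #s * #t + ∑ w ∈ tᶜ, G.degree w :=
  calc ∑ v ∈ s, G.degree v
      = ∑ v ∈ s, #(G.neighborFinset v ∩ t) + ∑ v ∈ s, #(G.neighborFinset v ∩ tᶜ) := by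
        simp_rw [← sum_add_distrib, ← sdiff_eq_inter_compl, card_inter_add_card_sdiff,
          G.card_neighborFinset_eq_degree]
    _ = ∑ v ∈ s, #(G.neighborFinset v ∩ t) + ∑ w ∈ tᶜ, #(G.neighborFinset w ∩ s) := by
        rw [sum_card_neighborFinset_inter_comm G s tᶜ]
    _ ≤ #s * #t + ∑ w ∈ tᶜ, G.degree w :=
        add_le_add (sum_le_card_nsmul _ _ _ fun _ _ => card_le_card inter_subset_right)
          (sum_le_sum fun _ _ => card_le_card inter_subset_left)

/-- The set of vertices of `G` of degree at least the real number `r`. -/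
noncomputable def highDegree (r : ℝ) : Finset V := {v | r ≤ G.degree v}

variable {G}

theorem mem_highDegree {r : ℝ} {v : V} : v ∈ highDegree G r ↔ r ≤ G.degree v := by
  simp [highDegree]

variable (G)

theorem highDegree_anti : Antitone (highDegree G) := fun _ _ hrs _ hv =>
  mem_highDegree.2 (hrs.trans (mem_highDegree.1 hv))

theorem sum_degree_le_card_mul_of_disjoint_highDegree {s : Finset V} {r : ℝ}
    (h : Disjoint s (highDegree G r)) : (∑ v ∈ s, G.degree v : ℝ) ≤ #s * r := by
  rw [← nsmul_eq_mul]
  refine sum_le_card_nsmul _ _ _ fun v hv => le_of_not_ge fun hr => ?_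
  exact disjoint_left.1 h hv (mem_highDegree.2 hr)

theorem sum_degree_le_of_highDegree {r t : ℝ} (hrt : r ≤ t) :
    (∑ v, G.degree v : ℝ) ≤ #(highDegree G t) * #(highDegree G r) +
      (#(highDegree G r) - #(highDegree G t)) * t +
      2 * ((Fintype.card V - #(highDegree G r)) * r) := by
  classical
  set A := highDegree G t
  set B := highDegree G r
  have hAB : A ⊆ B := highDegree_anti G hrt
  have hlow : (∑ v ∈ Bᶜ, G.degree v : ℝ) ≤ (Fintype.card V - #B) * r := by
    rw [← Nat.cast_sub (card_le_univ B), ← card_compl]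
    exact sum_degree_le_card_mul_of_disjoint_highDegree G disjoint_compl_left
  have hmid : (∑ v ∈ B \ A, G.degree v : ℝ) ≤ (#B - #A) * t := by
    rw [← cast_card_sdiff hAB]
    exact sum_degree_le_card_mul_of_disjoint_highDegree G sdiff_disjoint
  have hhigh : (∑ v ∈ A, G.degree v : ℝ) ≤ #A * #B + ∑ v ∈ Bᶜ, (G.degree v : ℝ) :=
    mod_cast sum_degree_le_card_mul_card_add_sum_compl G A B
  rw [← sum_add_sum_compl B, ← sum_sdiff hAB]
  linarith

theorem one_add_mul_card_le_card_highDegree_add {γ : ℝ} (hγ : γ ≤ 3 / 8)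
    (hγV : 2 ≤ γ * Fintype.card V)
    (hG : (5 / 8 + γ) ^ 2 * (Fintype.card V * (Fintype.card V - 1)) ≤ ∑ v, (G.degree v : ℝ)) :
    (1 + γ) * Fintype.card V ≤
      #(highDegree G (3 / 8 * Fintype.card V)) + #(highDegree G (γ * Fintype.card V)) := by
  have hγ₀ : 0 ≤ γ := (pos_of_mul_pos_left (two_pos.trans_le hγV) (Nat.cast_nonneg _)).le
  refine one_add_mul_le_add_of_density_le hγ₀ hγ hγV (Nat.cast_nonneg _) hG
    (sum_degree_le_of_highDegree G (by gcongr)) ?_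
  simpa using sum_degree_le_of_highDegree G (le_refl (γ * Fintype.card V))

end Graph

section Link

variable {V : Type} [DecidableEq V] (H : Finset (Finset V)) {x v : V}

/-- The link graph of the vertex `x` in the 3-uniform hypergraph `H`: its edges are the pairs
`{v, w}` completing `x` to an edge of `H`. It lives on all of `V`, with `x` isolated; the
inequalities also discard the members of `H` of size less than three. -/
def linkGraph (x : V) : SimpleGraph V where
  Adj v w := v ≠ x ∧ w ≠ x ∧ v ≠ w ∧ {x, v, w} ∈ H
  symm := ⟨fun v w ⟨hv, hw, hvw, h⟩ => ⟨hw, hv, hvw.symm, pair_comm v w ▸ h⟩⟩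
  loopless := ⟨fun _ h => h.2.2.1 rfl⟩

instance (x : V) : DecidableRel (linkGraph H x).Adj := fun v w =>
  inferInstanceAs (Decidable (v ≠ x ∧ w ≠ x ∧ v ≠ w ∧ {x, v, w} ∈ H))

variable {H}

theorem exists_eq_triple_of_card_eq_three {e : Finset V} (he : #e = 3) (hx : x ∈ e) (hv : v ∈ e)
    (hvx : v ≠ x) : ∃ w, w ≠ x ∧ v ≠ w ∧ {x, v, w} = e := by
  have hv' : v ∈ e.erase x := mem_erase.2 ⟨hvx, hv⟩
  have hcard : #((e.erase x).erase v) = 1 := by rw [card_erase_of_mem hv', card_erase_of_mem hx, he]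
  obtain ⟨w, hw⟩ := card_eq_one.1 hcard
  have hwe : w ∈ (e.erase x).erase v := hw ▸ mem_singleton_self w
  refine ⟨w, ne_of_mem_erase (mem_of_mem_erase hwe), (ne_of_mem_erase hwe).symm, ?_⟩
  rw [← hw, insert_erase hv', insert_erase hx]

variable [Fintype V]

theorem degree_linkGraph_self : (linkGraph H x).degree x = 0 :=
  (SimpleGraph.degree_eq_zero _ _).2 fun _ h => h.1 rfl

theorem degree_linkGraph_of_ne (hH : ∀ e ∈ H, #e = 3) (hv : v ≠ x) :
    (linkGraph H x).degree v = pairDeg H x v := by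
  refine card_bij (fun w _ => {x, v, w}) ?_ ?_ ?_
  · intro w hw
    simpa using ((linkGraph H x).mem_neighborFinset v w).1 hw |>.2.2.2
  · intro w hw w' _ (heq : ({x, v, w} : Finset V) = {x, v, w'})
    obtain ⟨-, hwx, hvw, -⟩ := ((linkGraph H x).mem_neighborFinset v w).1 hw
    have hmem : w ∈ ({x, v, w'} : Finset V) := heq ▸ by simp
    simpa [hwx, hvw.symm] using hmem
  · intro e he
    obtain ⟨heH, hx, hve⟩ := mem_filter.1 he
    obtain ⟨w, hwx, hvw, rfl⟩ := exists_eq_triple_of_card_eq_three (hH e heH) hx hve hv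
    exact ⟨w, ((linkGraph H x).mem_neighborFinset v w).2 ⟨hv, hwx, hvw, heH⟩, rfl⟩

theorem degree_linkGraph_le_pairDeg (hH : ∀ e ∈ H, #e = 3) :
    (linkGraph H x).degree v ≤ pairDeg H x v := by
  obtain rfl | hv := eq_or_ne v x
  · simp [degree_linkGraph_self]
  · exact (degree_linkGraph_of_ne hH hv).le

theorem sum_pairDeg_erase (hH : ∀ e ∈ H, #e = 3) :
    ∑ v ∈ univ.erase x, pairDeg H x v = 2 * #{e ∈ H | x ∈ e} := by
  have hpair (v : V) : pairDeg H x v = #({e ∈ H | x ∈ e}.bipartiteAbove (· ∈ ·) v) := by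
    rw [pairDeg, bipartiteAbove, filter_filter]
  simp_rw [hpair, sum_card_bipartiteAbove_eq_sum_card_bipartiteBelow]
  rw [mul_comm]
  refine sum_const_nat fun e he => ?_
  obtain ⟨heH, hx⟩ := mem_filter.1 he
  have : (univ.erase x).bipartiteBelow (· ∈ ·) e = e.erase x := by ext; simp
  rw [this, card_erase_of_mem hx, hH e heH]

theorem sum_degree_linkGraph (hH : ∀ e ∈ H, #e = 3) :
    ∑ v, (linkGraph H x).degree v = 2 * #{e ∈ H | x ∈ e} := by
  rw [← sum_pairDeg_erase hH,
    ← sum_erase (f := fun v => (linkGraph H x).degree v) univ degree_linkGraph_self]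
  exact sum_congr rfl fun v hv => degree_linkGraph_of_ne hH (ne_of_mem_erase hv)

theorem one_add_mul_card_le_card_highDegree_linkGraph_add {γ : ℝ} (hH : ∀ e ∈ H, #e = 3)
    (hγ : γ ≤ 3 / 8) (hγV : 2 ≤ γ * Fintype.card V)
    (hx : (5 / 8 + γ) ^ 2 * ((Fintype.card V).choose 2 : ℝ) ≤ #{e ∈ H | x ∈ e}) :
    (1 + γ) * Fintype.card V ≤ #(highDegree (linkGraph H x) (3 / 8 * Fintype.card V)) +
      #(highDegree (linkGraph H x) (γ * Fintype.card V)) := by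
  refine one_add_mul_card_le_card_highDegree_add _ hγ hγV ?_
  rw [← Nat.cast_sum, sum_degree_linkGraph hH]
  rw [Nat.cast_choose_two] at hx
  push_cast
  linarith

theorem exists_card_eq_ceil_forall_le_pairDeg {γ r s : ℝ} {y : V} (hH : ∀ e ∈ H, #e = 3)
    (h : (1 + γ) * Fintype.card V ≤
      #(highDegree (linkGraph H x) r) + #(highDegree (linkGraph H y) s)) :
    ∃ D : Finset V, #D = ⌈γ * Fintype.card V⌉₊ ∧
      ∀ d ∈ D, r ≤ pairDeg H x d ∧ s ≤ pairDeg H y d := by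
  obtain ⟨D, hD, hcard⟩ := exists_subset_inter_card_eq_ceil ((one_add_mul γ _).symm.trans_le h)
  have hle {z d : V} {q : ℝ} (hd : d ∈ highDegree (linkGraph H z) q) : q ≤ pairDeg H z d :=
    (mem_highDegree.1 hd).trans (mod_cast degree_linkGraph_le_pairDeg hH)
  refine ⟨D, hcard, fun d hd => ?_⟩
  obtain ⟨hdx, hdy⟩ := mem_inter.1 (hD hd)
  exact ⟨hle hdx, hle hdy⟩

end Link

theorem claim_counting_D_general {γ : ℝ} (hγ : γ ≤ 3 / 8) {V : Type} [Fintype V] [DecidableEq V]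
    {H : Finset (Finset V)} {n : ℕ} (hcard : Fintype.card V = n) (hn : 2 ≤ γ * n)
    (huniform : ∀ e ∈ H, #e = 3) {x y : V}
    (hx : (5 / 8 + γ) ^ 2 * (n.choose 2 : ℝ) ≤ #{e ∈ H | x ∈ e})
    (hy : (5 / 8 + γ) ^ 2 * (n.choose 2 : ℝ) ≤ #{e ∈ H | y ∈ e}) :
    ∃ D : Finset V, #D = ⌈γ * (n : ℝ)⌉₊ ∧
      ((∀ d ∈ D, γ * n ≤ (pairDeg H x d : ℝ) ∧ 3 / 8 * n ≤ (pairDeg H y d : ℝ)) ∨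
       (∀ d ∈ D, γ * n ≤ (pairDeg H y d : ℝ) ∧ 3 / 8 * n ≤ (pairDeg H x d : ℝ))) := by
  subst hcard
  have hcx := one_add_mul_card_le_card_highDegree_linkGraph_add huniform hγ hn hx
  have hcy := one_add_mul_card_le_card_highDegree_linkGraph_add huniform hγ hn hy
  set N : ℝ := (Fintype.card V : ℝ)
  rcases le_total ((1 + γ) * N) (#(highDegree (linkGraph H x) (γ * N)) +
      #(highDegree (linkGraph H y) (3 / 8 * N))) with h | h
  · obtain ⟨D, hD, hdeg⟩ := exists_card_eq_ceil_forall_le_pairDeg huniform h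
    exact ⟨D, hD, .inl hdeg⟩
  · obtain ⟨D, hD, hdeg⟩ := exists_card_eq_ceil_forall_le_pairDeg (γ := γ) (x := y) (y := x)
      (r := γ * N) (s := 3 / 8 * N) huniform (by linarith only [h, hcx, hcy])
    exact ⟨D, hD, .inr hdeg⟩

theorem claim_counting_D (γ : ℝ) (hγ0 : 0 < γ) (hγ1 : γ < 3 / 8)
    (V : Type) [Fintype V] [DecidableEq V] (H : Finset (Finset V)) (n : ℕ)
    (hcard : Fintype.card V = n) (hn : (168 : ℝ) / γ ^ 7 ≤ n)
    (huniform : ∀ e ∈ H, e.card = 3)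
    (hdeg : ∀ v : V, (5 / 8 + γ) ^ 2 * (n.choose 2 : ℝ) ≤
      ((H.filter (fun e => v ∈ e)).card : ℝ)) :
    ∀ x y : V, ∃ D : Finset V, D.card = ⌈γ * (n : ℝ)⌉₊ ∧
      ((∀ d ∈ D, γ * n ≤ (pairDeg H x d : ℝ) ∧ 3 / 8 * n ≤ (pairDeg H y d : ℝ)) ∨
       (∀ d ∈ D, γ * n ≤ (pairDeg H y d : ℝ) ∧ 3 / 8 * n ≤ (pairDeg H x d : ℝ))) := by
  intro x y
  have hγn : 168 ≤ γ * n := le_mul_of_div_pow_succ_le hγ0 (by linarith) (by norm_num) hn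
  exact claim_counting_D_general hγ1.le hcard (by linarith) huniform (hdeg x) (hdeg y)
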